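/- (Lemma 2.4) Let 1 < γ < 3 and let (τ,u) be a C¹ solution of the p-system on ℝ × [0,T) with initial data (τ₀,u₀) satisfying Assumption A. Then for all x ∈ ℝ and t ∈ [0,T), τ(x,t) ≤ [ τ₀(x)^{(3−γ)/4} + K₀ (Y+Q) t ]^{4/(3−γ)}, where K₀ = ((3−γ)/8) (K₁γ)^{−1/4} √K_c (a constant depending only on γ and K₁). -/

import Mathlib

open Real Set MeasureTheory Filter

/-- `η(τ) = (2√(K₁γ)/(γ−1)) τ^{−(γ−1)/2}`. -/
noncomputable def etaP (K₁ γ τv : ℝ) : ℝ :=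
  2 * Real.sqrt (K₁ * γ) / (γ - 1) * τv ^ (-(γ - 1) / 2)

/-- Lagrangian sound speed `c(τ) = √(K₁γ) τ^{−(γ+1)/2}`. -/
noncomputable def soundP (K₁ γ τv : ℝ) : ℝ :=
  Real.sqrt (K₁ * γ) * τv ^ (-(γ + 1) / 2)

/-- `K_τ = (2√(K₁γ)/(γ−1))^{2/(γ−1)}`. -/
noncomputable def KtauP (K₁ γ : ℝ) : ℝ :=
  (2 * Real.sqrt (K₁ * γ) / (γ - 1)) ^ (2 / (γ - 1))

/-- `K_c = √(K₁γ) K_τ^{−(γ+1)/2}`. -/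
noncomputable def KcP (K₁ γ : ℝ) : ℝ :=
  Real.sqrt (K₁ * γ) * KtauP K₁ γ ^ (-(γ + 1) / 2)

/-- A `Cᵏ` solution `(τ, u)` of the p-system with `γ`-law pressure `p = K₁ τ^{−γ}`
on `ℝ × I`:  `τ > 0`, both components are `Cᵏ`, and the equations
`τ_t − u_x = 0`, `u_t + (p(τ))_x = 0` hold pointwise. -/
def PSysSol (K₁ γ : ℝ) (I : Set ℝ) (k : ℕ) (τ u : ℝ → ℝ → ℝ) : Prop :=
  (∀ x t, t ∈ I → 0 < τ x t) ∧
  ContDiffOn ℝ k (fun p : ℝ × ℝ => τ p.1 p.2) (Set.univ ×ˢ I) ∧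
  ContDiffOn ℝ k (fun p : ℝ × ℝ => u p.1 p.2) (Set.univ ×ˢ I) ∧
  (∀ x : ℝ, ∀ t ∈ I, deriv (fun t' => τ x t') t - deriv (fun x' => u x' t) x = 0) ∧
  (∀ x : ℝ, ∀ t ∈ I, deriv (fun t' => u x t') t + deriv (fun x' => K₁ * τ x' t ^ (-γ)) x = 0)

/-- Assumption A: `τ₀, u₀` are `C¹` with `‖τ₀‖_{C¹} + ‖u₀‖_{C¹} ≤ M₁` and `τ₀ ≥ M₂ > 0`. -/
def AssumptionA (M₁ M₂ : ℝ) (τ₀ u₀ : ℝ → ℝ) : Prop :=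
  ContDiff ℝ 1 τ₀ ∧ ContDiff ℝ 1 u₀ ∧ 0 < M₁ ∧ 0 < M₂ ∧
  (∀ x, |τ₀ x| + |deriv τ₀ x| + |u₀ x| + |deriv u₀ x| ≤ M₁) ∧
  (∀ x, M₂ ≤ τ₀ x)

/-!
The Riemann invariants `s = u + η`, `r = u - η` are transported with speeds `±c`, where the sound
speed `c` is a nondecreasing function of `η = (s - r) / 2`. Formally `√c s_x` satisfies the Riccati
equation `w' = -(c' / (2 √c)) w²` along forward characteristics, so it cannot increase, and by
reflection neither can `√c r_x` along backward ones. Since the solution is only `C¹`, the equation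
is derived for the difference quotients of `s`, whose derivatives converge locally uniformly to the
right-hand side, and characteristics are replaced by a maximum principle on backward triangles. The
triangles exist because the transported invariants keep their initial bounds, which bound `c`.

For the `γ`-law, `√c` is a constant times `η^((γ+1)/(2(γ-1)))`, so `y` and `q` stay below their
initial suprema. Their sum is a multiple of `τ^(-(γ+1)/4) u_x = τ^(-(γ+1)/4) τ_t`, which is, up to a
factor, the time derivative of `τ^((3-γ)/4)`; integrate in time.
-/

open Topology

section MaximumPrinciple

theorem exists_mem_le_of_fderiv_sub_pos {E : Type*} [NormedAddCommGroup E] [NormedSpace ℝ E]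
    {K B : Set E} (hK : IsCompact K) (hK' : Convex ℝ K) {F : E → ℝ} (hF : ContinuousOn F K)
    {p₀ : E} (hp₀ : p₀ ∈ K)
    (h : ∀ p ∈ K \ B, F p₀ ≤ F p →
      ∃ F' : E →L[ℝ] ℝ, HasFDerivAt F F' p ∧ ∃ z ∈ K, 0 < F' (z - p)) :
    ∃ p ∈ K ∩ B, F p₀ ≤ F p := by
  obtain ⟨p, hp, hmax⟩ := hK.exists_isMaxOn ⟨p₀, hp₀⟩ hF
  by_cases hpB : p ∈ B
  · exact ⟨p, ⟨hp, hpB⟩, hmax hp₀⟩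
  · obtain ⟨F', hF', z, hz, hpos⟩ := h p ⟨hp, hpB⟩ (hmax hp₀)
    have hcone : z - p ∈ posTangentConeAt K p :=
      sub_mem_posTangentConeAt_of_segment_subset (hK'.segment_subset hp hz)
    exact absurd (hmax.localize.hasFDerivWithinAt_nonpos hF'.hasFDerivWithinAt hcone) hpos.not_ge

theorem exists_side_le_of_fderiv_neg {x x₀ t t₀ : ℝ} (hx : x ≤ x₀) (ht : t ∈ Icc 0 t₀)
    {F : ℝ × ℝ → ℝ} (hF : ContinuousOn F (Icc x x₀ ×ˢ Icc 0 t₀))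
    (h : ∀ p ∈ Ico x x₀ ×ˢ Ioc 0 t₀,
      ∃ F' : ℝ × ℝ →L[ℝ] ℝ, HasFDerivAt F F' p ∧ ∃ a, 0 ≤ a ∧ F' (-a, 1) < 0) :
    ∃ p ∈ Icc x x₀ ×ˢ Icc 0 t₀, (p.2 = 0 ∨ p.1 = x₀) ∧ F (x, t) ≤ F p := by
  have hback : ∀ p ∈ Icc x x₀ ×ˢ Icc 0 t₀ \ {p | p.2 = 0 ∨ p.1 = x₀}, F (x, t) ≤ F p →
      ∃ F' : ℝ × ℝ →L[ℝ] ℝ, HasFDerivAt F F' p ∧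
        ∃ z ∈ Icc x x₀ ×ˢ Icc 0 t₀, 0 < F' (z - p) := by
    rintro p ⟨⟨⟨hxp, hpx₀⟩, hp0, hpt₀⟩, hpB⟩ -
    replace hp0 : 0 < p.2 := lt_of_le_of_ne hp0 fun h => hpB (.inl h.symm)
    replace hpx₀ : p.1 < x₀ := lt_of_le_of_ne hpx₀ fun h => hpB (.inr h)
    obtain ⟨F', hF', a, ha, hneg⟩ := h p ⟨⟨hxp, hpx₀⟩, hp0, hpt₀⟩
    have ha' : 0 < a + 1 := by linarith
    obtain ⟨δ, hδ, hδ₂, hδ₁⟩ : ∃ δ > 0, δ ≤ p.2 ∧ δ * (a + 1) ≤ x₀ - p.1 :=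
      ⟨min p.2 ((x₀ - p.1) / (a + 1)), lt_min hp0 (div_pos (sub_pos.2 hpx₀) ha'),
        min_le_left _ _, (le_div_iff₀ ha').1 (min_le_right _ _)⟩
    refine ⟨F', hF', p - δ • (-a, 1), ?_, ?_⟩
    · refine ⟨⟨?_, ?_⟩, ?_, ?_⟩ <;>
        simp only [Prod.fst_sub, Prod.snd_sub, Prod.smul_mk, smul_eq_mul] <;> nlinarith
    · rw [sub_sub_cancel_left, map_neg, map_smul, smul_eq_mul, neg_pos]
      exact mul_neg_of_pos_of_neg hδ hneg
  obtain ⟨p, ⟨hp, hpB⟩, hle⟩ := exists_mem_le_of_fderiv_sub_pos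
    (isCompact_Icc.prod isCompact_Icc) ((convex_Icc _ _).prod (convex_Icc _ _)) hF
    ⟨⟨le_rfl, hx⟩, ht⟩ hback
  exact ⟨p, hp, hpB, hle⟩

/-- The region `0 ≤ t ≤ t₀`, `x₀ - L (t₀ - t) ≤ x ≤ x₀`: it contains every backward path from
`(x₀, t₀)` with speed in `[0, L]`, that is, the past of `(x₀, t₀)` for forward characteristics. -/
def backwardTriangle (x₀ t₀ L : ℝ) : Set (ℝ × ℝ) :=
  {p | 0 ≤ p.2 ∧ p.2 ≤ t₀ ∧ x₀ - L * (t₀ - p.2) ≤ p.1 ∧ p.1 ≤ x₀}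

variable {x₀ t₀ L : ℝ}

theorem isCompact_backwardTriangle (hL : 0 ≤ L) : IsCompact (backwardTriangle x₀ t₀ L) := by
  refine (isCompact_Icc (a := ((x₀ - L * t₀, 0) : ℝ × ℝ)) (b := (x₀, t₀))).of_isClosed_subset ?_ ?_
  · simp only [backwardTriangle, ofPred_and]
    exact (isClosed_le (by fun_prop) (by fun_prop)).inter <|
      (isClosed_le (by fun_prop) (by fun_prop)).inter <|
      (isClosed_le (by fun_prop) (by fun_prop)).inter (isClosed_le (by fun_prop) (by fun_prop))
  · rintro ⟨x, t⟩ ⟨ht, htt₀, hx, hxx₀⟩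
    have : x₀ - L * t₀ ≤ x := by nlinarith
    exact ⟨⟨this, ht⟩, ⟨hxx₀, htt₀⟩⟩

theorem convex_backwardTriangle : Convex ℝ (backwardTriangle x₀ t₀ L) := by
  rintro ⟨x, t⟩ ⟨ht, htt₀, hx, hxx₀⟩ ⟨x', t'⟩ ⟨ht', htt₀', hx', hxx₀'⟩ a b ha hb hab
  obtain rfl : b = 1 - a := by linarith
  dsimp only at *
  refine ⟨?_, ?_, ?_, ?_⟩ <;> simp only [Prod.smul_mk, Prod.mk_add_mk, smul_eq_mul] <;> nlinarith

theorem apex_mem_backwardTriangle (ht₀ : 0 ≤ t₀) : (x₀, t₀) ∈ backwardTriangle x₀ t₀ L :=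
  ⟨ht₀, le_rfl, by simp, le_rfl⟩

theorem backwardTriangle_subset {T : ℝ} (ht₀ : t₀ < T) :
    backwardTriangle x₀ t₀ L ⊆ univ ×ˢ Ico 0 T :=
  fun _ hp => ⟨trivial, hp.1, hp.2.1.trans_lt ht₀⟩

theorem foot_mem_backwardTriangle {p : ℝ × ℝ} (hp : p ∈ backwardTriangle x₀ t₀ L) {a : ℝ}
    (ha : a ∈ Icc 0 L) : (p.1 - p.2 * a, 0) ∈ backwardTriangle x₀ t₀ L := by
  obtain ⟨ht, htt₀, hx, hxx₀⟩ := hp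
  have ha₀ := mul_nonneg ht ha.1
  have haL := mul_le_mul_of_nonneg_left ha.2 ht
  refine ⟨le_rfl, ht.trans htt₀, ?_, ?_⟩ <;> dsimp only <;> linarith

theorem exists_bottom_le_of_fderiv_neg (hL : 0 ≤ L) (ht₀ : 0 ≤ t₀) {F : ℝ × ℝ → ℝ}
    (hF : ContinuousOn F (backwardTriangle x₀ t₀ L))
    (h : ∀ p ∈ backwardTriangle x₀ t₀ L, 0 < p.2 → F (x₀, t₀) ≤ F p →
      ∃ F' : ℝ × ℝ →L[ℝ] ℝ, HasFDerivAt F F' p ∧ ∃ a ∈ Icc 0 L, F' (a, 1) < 0) :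
    ∃ x, (x, 0) ∈ backwardTriangle x₀ t₀ L ∧ F (x₀, t₀) ≤ F (x, 0) := by
  have hback : ∀ p ∈ backwardTriangle x₀ t₀ L \ {p | p.2 = 0}, F (x₀, t₀) ≤ F p →
      ∃ F' : ℝ × ℝ →L[ℝ] ℝ, HasFDerivAt F F' p ∧
        ∃ z ∈ backwardTriangle x₀ t₀ L, 0 < F' (z - p) := by
    rintro p ⟨hp, hp0⟩ hle
    have ht : 0 < p.2 := lt_of_le_of_ne hp.1 (Ne.symm hp0)
    obtain ⟨F', hF', a, ha, hneg⟩ := h p hp ht hle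
    refine ⟨F', hF', _, foot_mem_backwardTriangle hp ha, ?_⟩
    have hfoot : ((p.1 - p.2 * a, 0) : ℝ × ℝ) - p = -(p.2 • (a, 1)) := by ext <;> simp
    rw [hfoot, map_neg, map_smul, smul_eq_mul, neg_pos]
    exact mul_neg_of_pos_of_neg ht hneg
  obtain ⟨⟨x, t⟩, ⟨hp, rfl : t = 0⟩, hle⟩ := exists_mem_le_of_fderiv_sub_pos
    (isCompact_backwardTriangle hL) convex_backwardTriangle hF (apex_mem_backwardTriangle ht₀) hback
  exact ⟨x, hp, hle⟩

-- The penalty `-(f - f (x₀, t₀))²` confines the argument to points where `f` is close to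
-- `f (x₀, t₀)`, so that no bound on the speed is needed elsewhere.
theorem exists_bottom_abs_sub_lt_of_fderiv_eq_zero (hL : 0 ≤ L) (ht₀ : 0 ≤ t₀) {f : ℝ × ℝ → ℝ}
    (hf : ContinuousOn f (backwardTriangle x₀ t₀ L)) {d : ℝ} (hd : 0 < d)
    (h : ∀ p ∈ backwardTriangle x₀ t₀ L, 0 < p.2 → |f p - f (x₀, t₀)| < d →
      ∃ f' : ℝ × ℝ →L[ℝ] ℝ, HasFDerivAt f f' p ∧ ∃ a ∈ Icc 0 L, f' (a, 1) = 0) :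
    ∃ x, (x, 0) ∈ backwardTriangle x₀ t₀ L ∧ |f (x, 0) - f (x₀, t₀)| < d := by
  obtain ⟨ε, hε, hεd⟩ : ∃ ε > 0, ε * t₀ < d ^ 2 := by
    refine ⟨d ^ 2 / (t₀ + 1), by positivity, ?_⟩
    rw [div_mul_eq_mul_div, div_lt_iff₀ (by linarith)]
    nlinarith
  have hclose {p : ℝ × ℝ} (hp : 0 ≤ p.2)
      (hle : -(f (x₀, t₀) - f (x₀, t₀)) ^ 2 - ε * t₀ ≤ -(f p - f (x₀, t₀)) ^ 2 - ε * p.2) :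
      |f p - f (x₀, t₀)| < d := by
    refine abs_lt_of_sq_lt_sq ?_ hd.le
    nlinarith [mul_nonneg hε.le hp]
  obtain ⟨x, hx, hle⟩ := exists_bottom_le_of_fderiv_neg hL ht₀
    (F := fun p => -(f p - f (x₀, t₀)) ^ 2 - ε * p.2)
    (((hf.sub continuousOn_const).pow 2).neg.sub (by fun_prop)) fun p hp ht hle => by
      obtain ⟨f', hf', a, ha, hzero⟩ := h p hp ht (hclose ht.le hle)
      refine ⟨_, ((hf'.sub_const _).pow 2).neg.sub (hasFDerivAt_snd.const_mul ε), a, ha, ?_⟩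
      simpa [hzero]
  exact ⟨x, hx, hclose (p := (x, 0)) le_rfl hle⟩

theorem apex_le_of_tendstoUniformlyOn (hL : 0 ≤ L) (ht₀ : 0 ≤ t₀) {ι : Type*} {l : Filter ι}
    [l.NeBot] {F G : ι → ℝ × ℝ → ℝ} {f g a : ℝ × ℝ → ℝ} {Y : ℝ}
    (ha : ∀ p ∈ backwardTriangle x₀ t₀ L, a p ∈ Icc 0 L)
    (hFf : TendstoUniformlyOn F f l (backwardTriangle x₀ t₀ L))
    (hGg : TendstoUniformlyOn G g l (backwardTriangle x₀ t₀ L))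
    (hF : ∀ᶠ i in l, ContinuousOn (F i) (backwardTriangle x₀ t₀ L))
    (hFG : ∀ᶠ i in l, ∀ p ∈ backwardTriangle x₀ t₀ L, 0 < p.2 →
      ∃ F' : ℝ × ℝ →L[ℝ] ℝ, HasFDerivAt (F i) F' p ∧ F' (a p, 1) = G i p)
    (hg : ∀ p ∈ backwardTriangle x₀ t₀ L, g p ≤ 0)
    (hY : ∀ x, (x, 0) ∈ backwardTriangle x₀ t₀ L → f (x, 0) ≤ Y) :
    f (x₀, t₀) ≤ Y := by
  suffices H : ∀ ε > 0, f (x₀, t₀) ≤ Y + ε * (2 + t₀) by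
    refine le_of_forall_pos_le_add fun ε hε => ?_
    simpa [div_mul_cancel₀ ε (by positivity : 2 + t₀ ≠ 0)] using H (ε / (2 + t₀)) (by positivity)
  intro ε hε
  obtain ⟨i, hFc, hFG, hGε, hFε⟩ := (hF.and <| hFG.and <| (hGg.eventually_forall_lt hε hg).and <|
    Metric.tendstoUniformlyOn_iff.1 hFf ε hε).exists
  obtain ⟨x, hx, hle⟩ := exists_bottom_le_of_fderiv_neg hL ht₀
    (F := fun p => F i p - ε * p.2) (hFc.sub (by fun_prop)) fun p hp ht _ => by
      obtain ⟨F', hF', hG⟩ := hFG p hp ht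
      refine ⟨_, hF'.sub (hasFDerivAt_snd.const_mul ε), a p, ha p hp, ?_⟩
      simpa [hG] using hGε p hp
  have htop := (abs_lt.1 (hFε _ (apex_mem_backwardTriangle ht₀))).2
  have hbot := (abs_lt.1 (hFε _ hx)).1
  have := hY x hx
  dsimp only at hle
  linarith

end MaximumPrinciple

section DifferenceQuotients

variable {β : Type*}

/-- The difference quotient `(f (x + h, t) - f (x, t)) / h`. -/
noncomputable def slopeFst (f : ℝ × β → ℝ) (h : ℝ) (p : ℝ × β) : ℝ :=
  (f (p.1 + h, p.2) - f p) / h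

variable [TopologicalSpace β] {I : Set β}

theorem tendstoLocallyUniformlyOn_const {α ι : Type*} [TopologicalSpace α] (g : α → ℝ)
    (l : Filter ι) (S : Set α) : TendstoLocallyUniformlyOn (fun _ => g) g l S := fun _ hu _ _ =>
  ⟨univ, univ_mem, .of_forall fun _ _ _ => refl_mem_uniformity hu⟩

theorem tendstoLocallyUniformlyOn_of_exists_mem_Icc {g : ℝ × β → ℝ}
    (hg : ContinuousOn g (univ ×ˢ I)) {F : ℝ → ℝ × β → ℝ}
    (hF : ∀ h > 0, ∀ p ∈ univ ×ˢ I, ∃ ξ ∈ Icc p.1 (p.1 + h), F h p = g (ξ, p.2)) :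
    TendstoLocallyUniformlyOn F g (𝓝[>] 0) (univ ×ˢ I) := by
  rw [tendstoLocallyUniformlyOn_iff_forall_tendsto]
  intro p hp
  choose! ξ hξ hFξ using hF
  have hmem : ∀ᶠ z : ℝ × (ℝ × β) in 𝓝[>] 0 ×ˢ 𝓝[univ ×ˢ I] p, 0 < z.1 ∧ z.2 ∈ univ ×ˢ I :=
    (eventually_mem_nhdsWithin (s := Ioi (0 : ℝ))).prod_mk eventually_mem_nhdsWithin
  have hfst : Tendsto (fun z : ℝ × (ℝ × β) => z.2.1) (𝓝[>] 0 ×ˢ 𝓝[univ ×ˢ I] p) (𝓝 p.1) :=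
    (continuous_fst.continuousWithinAt (s := univ ×ˢ I) (x := p)).tendsto.comp tendsto_snd
  have hsnd : Tendsto (fun z : ℝ × (ℝ × β) => z.2.2) (𝓝[>] 0 ×ˢ 𝓝[univ ×ˢ I] p) (𝓝 p.2) :=
    (continuous_snd.continuousWithinAt (s := univ ×ˢ I) (x := p)).tendsto.comp tendsto_snd
  have hstep : Tendsto (fun z : ℝ × (ℝ × β) => z.1) (𝓝[>] 0 ×ˢ 𝓝[univ ×ˢ I] p) (𝓝 0) :=
    (tendsto_nhdsWithin_of_tendsto_nhds tendsto_id).comp tendsto_fst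
  have hξ' : Tendsto (fun z : ℝ × (ℝ × β) => ξ z.1 z.2) (𝓝[>] 0 ×ˢ 𝓝[univ ×ˢ I] p) (𝓝 p.1) :=
    tendsto_of_tendsto_of_tendsto_of_le_of_le' hfst (by simpa using hfst.add hstep)
      (hmem.mono fun z hz => (hξ z.1 hz.1 z.2 hz.2).1)
      (hmem.mono fun z hz => (hξ z.1 hz.1 z.2 hz.2).2)
  have hgξ : Tendsto (fun z : ℝ × (ℝ × β) => g (ξ z.1 z.2, z.2.2))
      (𝓝[>] 0 ×ˢ 𝓝[univ ×ˢ I] p) (𝓝 (g p)) :=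
    (hg p hp).tendsto.comp <| tendsto_nhdsWithin_iff.2
      ⟨hξ'.prodMk_nhds hsnd, hmem.mono fun z hz => ⟨trivial, hz.2.2⟩⟩
  have hF' : Tendsto (fun z : ℝ × (ℝ × β) => F z.1 z.2) (𝓝[>] 0 ×ˢ 𝓝[univ ×ˢ I] p) (𝓝 (g p)) :=
    hgξ.congr' (hmem.mono fun z hz => (hFξ z.1 hz.1 z.2 hz.2).symm)
  exact (((hg p hp).tendsto.comp tendsto_snd).prodMk_nhds hF').mono_right (nhds_le_uniformity _)

theorem tendstoLocallyUniformlyOn_translate_fst {g : ℝ × β → ℝ} (hg : ContinuousOn g (univ ×ˢ I)) :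
    TendstoLocallyUniformlyOn (fun h p => g (p.1 + h, p.2)) g (𝓝[>] 0) (univ ×ˢ I) :=
  tendstoLocallyUniformlyOn_of_exists_mem_Icc hg fun h hh p _ =>
    ⟨p.1 + h, ⟨by linarith, le_rfl⟩, rfl⟩

theorem tendstoLocallyUniformlyOn_slope_fst {f f' : ℝ × β → ℝ}
    (hf : ∀ p ∈ univ ×ˢ I, HasDerivAt (fun x => f (x, p.2)) (f' p) p.1)
    (hf' : ContinuousOn f' (univ ×ˢ I)) :
    TendstoLocallyUniformlyOn (slopeFst f) f' (𝓝[>] 0) (univ ×ˢ I) := by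
  refine tendstoLocallyUniformlyOn_of_exists_mem_Icc hf' fun h hh p hp => ?_
  have hderiv (x : ℝ) : HasDerivAt (fun x => f (x, p.2)) (f' (x, p.2)) x :=
    hf (x, p.2) ⟨trivial, hp.2⟩
  obtain ⟨ξ, hξ, hslope⟩ := exists_hasDerivAt_eq_slope _ _ (lt_add_of_pos_right p.1 hh)
    (fun x _ => (hderiv x).continuousAt.continuousWithinAt) fun x _ => hderiv x
  exact ⟨ξ, Ioo_subset_Icc_self hξ, by rw [hslope, add_sub_cancel_left, slopeFst]⟩

end DifferenceQuotients

section PartialDerivative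

/-- The partial derivative `∂f/∂x` of a function `f (x, t)`. -/
noncomputable def derivFst (f : ℝ × ℝ → ℝ) (p : ℝ × ℝ) : ℝ :=
  deriv (fun x => f (x, p.2)) p.1

variable {f : ℝ × ℝ → ℝ} {I : Set ℝ} {p : ℝ × ℝ}

theorem hasDerivAt_fst_of_differentiableWithinAt (hp : p.2 ∈ I)
    (hf : DifferentiableWithinAt ℝ f (univ ×ˢ I) p) :
    HasDerivAt (fun x => f (x, p.2)) (fderivWithin ℝ f (univ ×ˢ I) p (1, 0)) p.1 := by
  rw [← hasDerivWithinAt_univ]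
  exact hf.hasFDerivWithinAt.comp_hasDerivWithinAt_of_eq p.1
    ((hasDerivAt_id p.1).prodMk (hasDerivAt_const p.1 p.2)).hasDerivWithinAt
    (fun x _ => ⟨trivial, hp⟩) rfl

theorem hasDerivAt_derivFst (hf : ContDiffOn ℝ 1 f (univ ×ˢ I)) (hp : p ∈ univ ×ˢ I) :
    HasDerivAt (fun x => f (x, p.2)) (derivFst f p) p.1 :=
  (hasDerivAt_fst_of_differentiableWithinAt hp.2
    (hf.differentiableOn one_ne_zero p hp)).differentiableAt.hasDerivAt

theorem continuousOn_derivFst (hf : ContDiffOn ℝ 1 f (univ ×ˢ I)) (hI : UniqueDiffOn ℝ I) :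
    ContinuousOn (derivFst f) (univ ×ˢ I) := by
  have hcont : ContinuousOn (fun p => fderivWithin ℝ f (univ ×ˢ I) p (1, 0)) (univ ×ˢ I) :=
    (hf.continuousOn_fderivWithin (uniqueDiffOn_univ.prod hI) le_rfl).clm_apply continuousOn_const
  exact hcont.congr fun p hp => (hasDerivAt_fst_of_differentiableWithinAt hp.2
    (hf.differentiableOn one_ne_zero p hp)).deriv

theorem differentiableAt_of_mem_Ioo {T : ℝ} (hf : ContDiffOn ℝ 1 f (univ ×ˢ Ico 0 T))
    (hp : p ∈ univ ×ˢ Ioo 0 T) : DifferentiableAt ℝ f p :=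
  (hf.differentiableOn one_ne_zero).differentiableAt
    (prod_mem_nhds univ_mem (Ico_mem_nhds hp.2.1 hp.2.2))

theorem fderiv_one_zero_eq_derivFst (hf : DifferentiableAt ℝ f p) :
    fderiv ℝ f p (1, 0) = derivFst f p :=
  (hf.hasFDerivAt.comp_hasDerivAt_of_eq p.1
    ((hasDerivAt_id p.1).prodMk (hasDerivAt_const p.1 p.2)) rfl).deriv.symm

theorem fderiv_eq_sub_mul_derivFst (hf : DifferentiableAt ℝ f p) {b : ℝ}
    (hb : fderiv ℝ f p (b, 1) = 0) (a : ℝ) : fderiv ℝ f p (a, 1) = (a - b) * derivFst f p := by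
  have hsplit : ((a, 1) : ℝ × ℝ) = (b, 1) + (a - b) • (1, 0) := by ext <;> simp
  rw [hsplit, map_add, map_smul, hb, zero_add, fderiv_one_zero_eq_derivFst hf, smul_eq_mul]

theorem fderiv_apply_one_eq (hf : DifferentiableAt ℝ f p) {f' : ℝ}
    (hf' : HasDerivAt (fun t => f (p.1, t)) f' p.2) (a : ℝ) :
    fderiv ℝ f p (a, 1) = a * derivFst f p + f' := by
  have htime := hf.hasFDerivAt.comp_hasDerivAt_of_eq p.2
    ((hasDerivAt_const p.2 p.1).prodMk (hasDerivAt_id p.2)) rfl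
  have hsplit : ((a, 1) : ℝ × ℝ) = a • (1, 0) + (0, 1) := by ext <;> simp
  rw [hsplit, map_add, map_smul, fderiv_one_zero_eq_derivFst hf, htime.unique hf', smul_eq_mul]

end PartialDerivative

/-- A positive, nondecreasing `C¹` wave speed, as a function of the amplitude `η > 0`; the
monotonicity is the (weak) genuine nonlinearity that makes gradients decrease. -/
structure IsWaveSpeed (c : ℝ → ℝ) : Prop where
  pos : ∀ v, 0 < v → 0 < c v
  monotoneOn : MonotoneOn c (Ioi 0)
  contDiffOn : ContDiffOn ℝ 1 c (Ioi 0)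

namespace IsWaveSpeed

variable {c : ℝ → ℝ} (hc : IsWaveSpeed c)
include hc

theorem hasDerivAt {v : ℝ} (hv : 0 < v) : HasDerivAt c (deriv c v) v :=
  ((hc.contDiffOn.differentiableOn one_ne_zero).differentiableAt (Ioi_mem_nhds hv)).hasDerivAt

theorem continuousOn_deriv : ContinuousOn (deriv c) (Ioi 0) :=
  hc.contDiffOn.continuousOn_deriv_of_isOpen isOpen_Ioi le_rfl

theorem deriv_nonneg {v : ℝ} (hv : 0 < v) : 0 ≤ deriv c v := by
  rw [← derivWithin_of_isOpen isOpen_Ioi (mem_Ioi.2 hv)]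
  exact hc.monotoneOn.derivWithin_nonneg

end IsWaveSpeed

/-- The wave speed `c(η)` at a point, where `η = (s - r) / 2` in terms of the Riemann
invariants. -/
noncomputable def speedAt (c : ℝ → ℝ) (s r : ℝ × ℝ → ℝ) (p : ℝ × ℝ) : ℝ :=
  c ((s p - r p) / 2)

/-- A `C¹` solution on `ℝ × [0, T)` of the diagonal system `s_t + c s_x = 0`, `r_t - c r_x = 0`
with `r < s` and wave speed `c = c((s - r) / 2)`. The equations are written as directional
derivatives, and only for `t > 0`, where they are two-sided. -/
structure IsRiemannPair (c : ℝ → ℝ) (T : ℝ) (s r : ℝ × ℝ → ℝ) : Prop where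
  contDiffOn_fst : ContDiffOn ℝ 1 s (univ ×ˢ Ico 0 T)
  contDiffOn_snd : ContDiffOn ℝ 1 r (univ ×ˢ Ico 0 T)
  snd_lt_fst : ∀ p ∈ univ ×ˢ Ico 0 T, r p < s p
  transport_fst : ∀ p ∈ univ ×ˢ Ioo 0 T, fderiv ℝ s p (speedAt c s r p, 1) = 0
  transport_snd : ∀ p ∈ univ ×ˢ Ioo 0 T, fderiv ℝ r p (-speedAt c s r p, 1) = 0

theorem derivFst_neg_comp_neg (f : ℝ × ℝ → ℝ) (p : ℝ × ℝ) :
    derivFst (fun p => -f (-p.1, p.2)) p = derivFst f (-p.1, p.2) := by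
  simp only [derivFst, deriv.fun_neg, deriv_comp_neg (fun x => f (x, p.2)), neg_neg]

theorem fderiv_neg_comp_neg {f : ℝ × ℝ → ℝ} {p : ℝ × ℝ}
    (hf : DifferentiableAt ℝ f (-p.1, p.2)) (a b : ℝ) :
    fderiv ℝ (fun p => -f (-p.1, p.2)) p (a, b) = -fderiv ℝ f (-p.1, p.2) (-a, b) := by
  have hreflect : HasFDerivAt (fun p : ℝ × ℝ => (-p.1, p.2))
      ((-ContinuousLinearMap.fst ℝ ℝ ℝ).prod (ContinuousLinearMap.snd ℝ ℝ ℝ)) p :=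
    hasFDerivAt_fst.neg.prodMk hasFDerivAt_snd
  have hcomp : HasFDerivAt (fun p : ℝ × ℝ => -f (-p.1, p.2)) _ p :=
    (hf.hasFDerivAt.comp p hreflect).neg
  rw [hcomp.fderiv]
  simp

namespace IsRiemannPair

variable {c : ℝ → ℝ} {T : ℝ} {s r : ℝ × ℝ → ℝ}

theorem speedAt_reflect (p : ℝ × ℝ) :
    speedAt c (fun p => -r (-p.1, p.2)) (fun p => -s (-p.1, p.2)) p =
      speedAt c s r (-p.1, p.2) := by
  simp only [speedAt, neg_sub_neg]

theorem reflect (h : IsRiemannPair c T s r) :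
    IsRiemannPair c T (fun p => -r (-p.1, p.2)) (fun p => -s (-p.1, p.2)) := by
  have hmaps (J : Set ℝ) : MapsTo (fun p : ℝ × ℝ => (-p.1, p.2)) (univ ×ˢ J) (univ ×ˢ J) :=
    fun p hp => ⟨trivial, hp.2⟩
  have hsmooth : ContDiffOn ℝ 1 (fun p : ℝ × ℝ => (-p.1, p.2)) (univ ×ˢ Ico 0 T) := by fun_prop
  refine ⟨(h.contDiffOn_snd.comp hsmooth (hmaps _)).neg,
    (h.contDiffOn_fst.comp hsmooth (hmaps _)).neg,
    fun p hp => neg_lt_neg (h.snd_lt_fst _ (hmaps _ hp)), fun p hp => ?_, fun p hp => ?_⟩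
  · rw [fderiv_neg_comp_neg (differentiableAt_of_mem_Ioo h.contDiffOn_snd (hmaps _ hp)),
      speedAt_reflect, h.transport_snd _ (hmaps _ hp), neg_zero]
  · rw [fderiv_neg_comp_neg (differentiableAt_of_mem_Ioo h.contDiffOn_fst (hmaps _ hp)),
      speedAt_reflect, neg_neg, h.transport_fst _ (hmaps _ hp), neg_zero]

variable (hc : IsWaveSpeed c) (h : IsRiemannPair c T s r)
include h

theorem half_sub_pos {p : ℝ × ℝ} (hp : p ∈ univ ×ˢ Ico 0 T) : 0 < (s p - r p) / 2 :=
  half_pos (sub_pos.2 (h.snd_lt_fst p hp))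

theorem fderiv_fst {p : ℝ × ℝ} (hp : p ∈ univ ×ˢ Ioo 0 T) (a : ℝ) :
    fderiv ℝ s p (a, 1) = (a - speedAt c s r p) * derivFst s p :=
  fderiv_eq_sub_mul_derivFst (differentiableAt_of_mem_Ioo h.contDiffOn_fst hp)
    (h.transport_fst p hp) a

theorem fderiv_snd {p : ℝ × ℝ} (hp : p ∈ univ ×ˢ Ioo 0 T) (a : ℝ) :
    fderiv ℝ r p (a, 1) = (a + speedAt c s r p) * derivFst r p := by
  rw [fderiv_eq_sub_mul_derivFst (differentiableAt_of_mem_Ioo h.contDiffOn_snd hp)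
    (h.transport_snd p hp) a, sub_neg_eq_add]

include hc

theorem speedAt_pos {p : ℝ × ℝ} (hp : p ∈ univ ×ˢ Ico 0 T) : 0 < speedAt c s r p :=
  hc.pos _ (h.half_sub_pos hp)

theorem speedAt_le {p : ℝ × ℝ} (hp : p ∈ univ ×ˢ Ico 0 T) {m M : ℝ} (hs : s p ≤ M)
    (hr : m ≤ r p) : speedAt c s r p ≤ c ((M - m) / 2) := by
  have hle : (s p - r p) / 2 ≤ (M - m) / 2 := by linarith
  exact hc.monotoneOn (h.half_sub_pos hp) ((h.half_sub_pos hp).trans_le hle) hle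

theorem bddBelow_snd_image (hr : BddBelow (range fun x => r (x, 0))) (x₀ : ℝ) {t₀ : ℝ}
    (ht₀ : t₀ ∈ Ico 0 T) : BddBelow (r '' Iic x₀ ×ˢ Icc 0 t₀) := by
  obtain ⟨m₀, hm₀⟩ := hr
  have hstrip (x : ℝ) : Icc x x₀ ×ˢ Icc 0 t₀ ⊆ univ ×ˢ Ico 0 T :=
    fun p hp => ⟨trivial, hp.2.1, hp.2.2.trans_lt ht₀.2⟩
  obtain ⟨m₁, hm₁⟩ := ((isCompact_Icc.prod isCompact_Icc).image_of_continuousOn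
    (h.contDiffOn_snd.continuousOn.mono (hstrip x₀))).bddBelow
  refine ⟨min m₀ m₁ - t₀, ?_⟩
  rintro _ ⟨⟨x, t⟩, ⟨hx, ht⟩, rfl⟩
  obtain ⟨p, hp, hside, hle⟩ := exists_side_le_of_fderiv_neg hx ht (F := fun p => -r p - p.2)
    ((h.contDiffOn_snd.continuousOn.mono (hstrip x)).neg.sub (by fun_prop)) fun p hp => by
      have hp' : p ∈ univ ×ˢ Ioo 0 T := ⟨trivial, hp.2.1, hp.2.2.trans_lt ht₀.2⟩
      refine ⟨_, (differentiableAt_of_mem_Ioo h.contDiffOn_snd hp').hasFDerivAt.neg.sub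
        hasFDerivAt_snd, speedAt c s r p, ?_, ?_⟩
      · exact (h.speedAt_pos hc ⟨trivial, Ioo_subset_Ico_self hp'.2⟩).le
      · simp [h.transport_snd p hp']
  have hrp : min m₀ m₁ ≤ r p := by
    rcases hside with hp0 | hpx₀
    · exact (min_le_left _ _).trans (hm₀ ⟨p.1, by simp [← hp0]⟩)
    · exact (min_le_right _ _).trans (hm₁ ⟨p, ⟨⟨hpx₀.ge, hpx₀.le⟩, hp.2⟩, rfl⟩)
  have hp₂ := hp.2.1
  have ht₂ := ht.2
  dsimp only at *
  linarith

theorem fst_le_of_fst_zero_le (hr : BddBelow (range fun x => r (x, 0))) {M : ℝ}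
    (hM : ∀ x, s (x, 0) ≤ M) {p₀ : ℝ × ℝ} (hp₀ : p₀ ∈ univ ×ˢ Ico 0 T) : s p₀ ≤ M := by
  obtain ⟨x₀, t₀⟩ := p₀
  obtain ⟨m, hm⟩ := h.bddBelow_snd_image hc hr x₀ hp₀.2
  have ht₀ : 0 ≤ t₀ := hp₀.2.1
  have hlow (p : ℝ × ℝ) (hp₁ : p.1 ≤ x₀) (hp₂ : p.2 ∈ Icc 0 t₀) : m ≤ r p :=
    hm ⟨p, ⟨hp₁, hp₂⟩, rfl⟩
  by_contra! hlt
  set d := s (x₀, t₀) - M with hd_def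
  have hd : 0 < d := sub_pos.2 hlt
  have hL : 0 ≤ c ((s (x₀, t₀) + d - m) / 2) := by
    have := h.snd_lt_fst _ hp₀
    have := hlow (x₀, t₀) le_rfl ⟨ht₀, le_rfl⟩
    exact (hc.pos _ (by linarith)).le
  have hsub := backwardTriangle_subset (x₀ := x₀) (L := c ((s (x₀, t₀) + d - m) / 2)) hp₀.2.2
  obtain ⟨x, -, hx⟩ := exists_bottom_abs_sub_lt_of_fderiv_eq_zero hL ht₀
    (h.contDiffOn_fst.continuousOn.mono hsub) hd fun p hp ht hclose => by
      have hp' : p ∈ univ ×ˢ Ioo 0 T := ⟨trivial, ht, (hsub hp).2.2⟩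
      have hsp : s p ≤ s (x₀, t₀) + d := by linarith [(abs_lt.1 hclose).2]
      exact ⟨_, (differentiableAt_of_mem_Ioo h.contDiffOn_fst hp').hasFDerivAt, speedAt c s r p,
        ⟨(h.speedAt_pos hc (hsub hp)).le,
          h.speedAt_le hc (hsub hp) hsp (hlow p hp.2.2.2 ⟨hp.1, hp.2.1⟩)⟩, h.transport_fst p hp'⟩
  linarith [(abs_lt.1 hx).1, hM x, hd_def]

theorem le_snd_of_le_snd_zero (hs : BddAbove (range fun x => s (x, 0))) {m : ℝ}
    (hm : ∀ x, m ≤ r (x, 0)) {p : ℝ × ℝ} (hp : p ∈ univ ×ˢ Ico 0 T) : m ≤ r p := by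
  obtain ⟨M, hM⟩ := hs
  have hle : -r (- -p.1, p.2) ≤ -m := h.reflect.fst_le_of_fst_zero_le hc
    ⟨-M, by rintro _ ⟨x, rfl⟩; exact neg_le_neg (hM ⟨-x, rfl⟩)⟩ (fun x => neg_le_neg (hm (-x)))
    (p₀ := (-p.1, p.2)) ⟨trivial, hp.2⟩
  rwa [neg_neg, neg_le_neg_iff] at hle

theorem exists_forall_speedAt_le (hs : BddAbove (range fun x => s (x, 0)))
    (hr : BddBelow (range fun x => r (x, 0))) :
    ∃ L, ∀ p ∈ univ ×ˢ Ico 0 T, speedAt c s r p ≤ L := by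
  have ⟨M, hM⟩ := hs
  have ⟨m, hm⟩ := hr
  exact ⟨c ((M - m) / 2), fun p hp => h.speedAt_le hc hp
    (h.fst_le_of_fst_zero_le hc hr (fun x => hM ⟨x, rfl⟩) hp)
    (h.le_snd_of_le_snd_zero hc hs (fun x => hm ⟨x, rfl⟩) hp)⟩

end IsRiemannPair

namespace IsRiemannPair

variable {c : ℝ → ℝ} {T : ℝ} {s r : ℝ × ℝ → ℝ} (hc : IsWaveSpeed c) (h : IsRiemannPair c T s r)
include hc h

theorem contDiffOn_speedAt : ContDiffOn ℝ 1 (speedAt c s r) (univ ×ˢ Ico 0 T) :=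
  hc.contDiffOn.comp ((h.contDiffOn_fst.sub h.contDiffOn_snd).div_const 2)
    fun _ hp => h.half_sub_pos hp

theorem derivFst_speedAt {p : ℝ × ℝ} (hp : p ∈ univ ×ˢ Ico 0 T) :
    derivFst (speedAt c s r) p =
      deriv c ((s p - r p) / 2) * ((derivFst s p - derivFst r p) / 2) := by
  have hη := ((hasDerivAt_derivFst h.contDiffOn_fst hp).sub
    (hasDerivAt_derivFst h.contDiffOn_snd hp)).div_const 2
  exact ((hc.hasDerivAt (h.half_sub_pos hp)).comp p.1 hη).deriv

theorem hasFDerivAt_sqrt_speedAt {p : ℝ × ℝ} (hp : p ∈ univ ×ˢ Ioo 0 T) :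
    ∃ σ' : ℝ × ℝ →L[ℝ] ℝ, HasFDerivAt (fun p => √(speedAt c s r p)) σ' p ∧
      σ' (speedAt c s r p, 1) =
        -(deriv c ((s p - r p) / 2) * √(speedAt c s r p) / 2 * derivFst r p) := by
  have hp₀ : p ∈ univ ×ˢ Ico 0 T := ⟨trivial, Ioo_subset_Ico_self hp.2⟩
  have hpos := h.speedAt_pos hc hp₀
  have hη : HasFDerivAt (fun p => (s p - r p) / 2)
      ((2⁻¹ : ℝ) • (fderiv ℝ s p - fderiv ℝ r p)) p := by
    simp only [div_eq_mul_inv]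
    exact ((differentiableAt_of_mem_Ioo h.contDiffOn_fst hp).hasFDerivAt.sub
      (differentiableAt_of_mem_Ioo h.contDiffOn_snd hp).hasFDerivAt).mul_const (2⁻¹ : ℝ)
  have hC : HasFDerivAt (speedAt c s r) _ p :=
    (hc.hasDerivAt (h.half_sub_pos hp₀)).comp_hasFDerivAt p hη
  refine ⟨_, hC.sqrt hpos.ne', ?_⟩
  have hsqrt : √(speedAt c s r p) ≠ 0 := (Real.sqrt_pos.2 hpos).ne'
  simp only [smul_apply, sub_apply, smul_eq_mul,
    h.transport_fst p hp, h.fderiv_snd hp]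
  field_simp
  rw [Real.sq_sqrt hpos.le]
  ring

omit hc in
theorem hasFDerivAt_slopeFst_fst {p : ℝ × ℝ} (hp : p ∈ univ ×ˢ Ioo 0 T) (k : ℝ) :
    ∃ D : ℝ × ℝ →L[ℝ] ℝ, HasFDerivAt (slopeFst s k) D p ∧
      D (speedAt c s r p, 1) =
        -(slopeFst (speedAt c s r) k p * derivFst s (p.1 + k, p.2)) := by
  have hpk : (p.1 + k, p.2) ∈ univ ×ˢ Ioo 0 T := ⟨trivial, hp.2⟩
  have htranslate : HasFDerivAt (fun p : ℝ × ℝ => (p.1 + k, p.2))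
      ((ContinuousLinearMap.fst ℝ ℝ ℝ).prod (ContinuousLinearMap.snd ℝ ℝ ℝ)) p :=
    (hasFDerivAt_fst.add_const k).prodMk hasFDerivAt_snd
  have hslope : HasFDerivAt (slopeFst s k) (k⁻¹ • ((fderiv ℝ s (p.1 + k, p.2)).comp
      ((ContinuousLinearMap.fst ℝ ℝ ℝ).prod (ContinuousLinearMap.snd ℝ ℝ ℝ)) -
        fderiv ℝ s p)) p := by
    change HasFDerivAt (fun p : ℝ × ℝ => (s (p.1 + k, p.2) - s p) / k) _ p
    simp only [div_eq_mul_inv]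
    exact (((differentiableAt_of_mem_Ioo h.contDiffOn_fst hpk).hasFDerivAt.comp p htranslate).sub
      (differentiableAt_of_mem_Ioo h.contDiffOn_fst hp).hasFDerivAt).mul_const k⁻¹
  refine ⟨_, hslope, ?_⟩
  simp only [ContinuousLinearMap.fst_prod_snd, ContinuousLinearMap.comp_id, smul_apply, sub_apply,
    h.fderiv_fst hpk, h.transport_fst p hp, sub_zero, smul_eq_mul, slopeFst]
  ring

/-- The derivative of the weighted difference quotient `√c (s (x + k, t) - s (x, t)) / k` along
the direction `(c, 1)`. For `k → 0` the terms in `r_x` cancel, and only `-(c' √c / 2) s_x²`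
remains. -/
noncomputable def slopeDecay (c : ℝ → ℝ) (s r : ℝ × ℝ → ℝ) (k : ℝ) (p : ℝ × ℝ) : ℝ :=
  -(deriv c ((s p - r p) / 2) * √(speedAt c s r p) / 2 * derivFst r p) * slopeFst s k p -
    √(speedAt c s r p) * (slopeFst (speedAt c s r) k p * derivFst s (p.1 + k, p.2))

theorem hasFDerivAt_sqrt_speedAt_mul_slopeFst {p : ℝ × ℝ} (hp : p ∈ univ ×ˢ Ioo 0 T) (k : ℝ) :
    ∃ D : ℝ × ℝ →L[ℝ] ℝ, HasFDerivAt (fun p => √(speedAt c s r p) * slopeFst s k p) D p ∧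
      D (speedAt c s r p, 1) = slopeDecay c s r k p := by
  obtain ⟨σ', hσ', hσ⟩ := h.hasFDerivAt_sqrt_speedAt hc hp
  obtain ⟨D, hD', hD⟩ := h.hasFDerivAt_slopeFst_fst hp k
  refine ⟨_, hσ'.mul hD', ?_⟩
  simp only [add_apply, smul_apply, smul_eq_mul, hσ, hD, slopeDecay]
  ring

theorem tendstoLocallyUniformlyOn_sqrt_speedAt_mul_slopeFst :
    TendstoLocallyUniformlyOn (fun k p => √(speedAt c s r p) * slopeFst s k p)
      (fun p => √(speedAt c s r p) * derivFst s p) (𝓝[>] 0) (univ ×ˢ Ico 0 T) := by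
  have hsx := continuousOn_derivFst h.contDiffOn_fst (uniqueDiffOn_Ico 0 T)
  exact (tendstoLocallyUniformlyOn_const _ _ _).fun_mul₀
    (tendstoLocallyUniformlyOn_slope_fst (fun p => hasDerivAt_derivFst h.contDiffOn_fst) hsx)
    (h.contDiffOn_speedAt hc).continuousOn.sqrt hsx

theorem tendstoLocallyUniformlyOn_slopeDecay :
    TendstoLocallyUniformlyOn (slopeDecay c s r)
      (fun p => -(deriv c ((s p - r p) / 2) * √(speedAt c s r p) / 2 * derivFst s p ^ 2))
      (𝓝[>] 0) (univ ×ˢ Ico 0 T) := by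
  have hC := h.contDiffOn_speedAt hc
  have hσ : ContinuousOn (fun p => √(speedAt c s r p)) (univ ×ˢ Ico 0 T) := hC.continuousOn.sqrt
  have hsx := continuousOn_derivFst h.contDiffOn_fst (uniqueDiffOn_Ico 0 T)
  have hrx := continuousOn_derivFst h.contDiffOn_snd (uniqueDiffOn_Ico 0 T)
  have hCx := continuousOn_derivFst hC (uniqueDiffOn_Ico 0 T)
  have hc' : ContinuousOn (fun p => deriv c ((s p - r p) / 2)) (univ ×ˢ Ico 0 T) :=
    hc.continuousOn_deriv.comp
      ((h.contDiffOn_fst.continuousOn.sub h.contDiffOn_snd.continuousOn).div_const 2)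
      fun _ hp => h.half_sub_pos hp
  have hslope_s := tendstoLocallyUniformlyOn_slope_fst
    (fun p => hasDerivAt_derivFst h.contDiffOn_fst) hsx
  have hslope_C := tendstoLocallyUniformlyOn_slope_fst (fun p => hasDerivAt_derivFst hC) hCx
  have hlim := ((tendstoLocallyUniformlyOn_const _ _ _).fun_mul₀ hslope_s
      (((hc'.mul hσ).div_const 2).mul hrx).neg hsx).sub
    ((tendstoLocallyUniformlyOn_const _ _ _).fun_mul₀
      (hslope_C.fun_mul₀ (tendstoLocallyUniformlyOn_translate_fst hsx) hCx hsx) hσ (hCx.mul hsx))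
  refine hlim.congr_right fun p hp => ?_
  simp only [Pi.sub_apply, Pi.neg_apply, Pi.mul_apply, h.derivFst_speedAt hc hp]
  ring

theorem sqrt_speedAt_mul_derivFst_fst_le (hs : BddAbove (range fun x => s (x, 0)))
    (hr : BddBelow (range fun x => r (x, 0))) {Y : ℝ}
    (hY : ∀ x, √(speedAt c s r (x, 0)) * derivFst s (x, 0) ≤ Y) {p₀ : ℝ × ℝ}
    (hp₀ : p₀ ∈ univ ×ˢ Ico 0 T) : √(speedAt c s r p₀) * derivFst s p₀ ≤ Y := by
  obtain ⟨x₀, t₀⟩ := p₀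
  have ht₀ : t₀ ∈ Ico 0 T := hp₀.2
  obtain ⟨L, hL⟩ := h.exists_forall_speedAt_le hc hs hr
  have hL₀ : 0 ≤ L := (h.speedAt_pos hc hp₀).le.trans (hL _ hp₀)
  have hsub := backwardTriangle_subset (x₀ := x₀) (L := L) ht₀.2
  have hcompact := isCompact_backwardTriangle (x₀ := x₀) (t₀ := t₀) hL₀
  have hσ := (h.contDiffOn_speedAt hc).continuousOn.sqrt
  have hunif {F : ℝ → ℝ × ℝ → ℝ} {f : ℝ × ℝ → ℝ}
      (hF : TendstoLocallyUniformlyOn F f (𝓝[>] 0) (univ ×ˢ Ico 0 T)) :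
      TendstoUniformlyOn F f (𝓝[>] 0) (backwardTriangle x₀ t₀ L) :=
    (tendstoLocallyUniformlyOn_iff_tendstoUniformlyOn_of_compact hcompact).1 (hF.mono hsub)
  refine apex_le_of_tendstoUniformlyOn hL₀ ht₀.1
    (fun p hp => ⟨(h.speedAt_pos hc (hsub hp)).le, hL p (hsub hp)⟩)
    (hunif (h.tendstoLocallyUniformlyOn_sqrt_speedAt_mul_slopeFst hc))
    (hunif (h.tendstoLocallyUniformlyOn_slopeDecay hc)) ?_ ?_ ?_ fun x _ => hY x
  · refine .of_forall fun k => (hσ.mul ?_).mono hsub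
    have htranslate : ContinuousOn (fun p : ℝ × ℝ => s (p.1 + k, p.2)) (univ ×ˢ Ico 0 T) :=
      h.contDiffOn_fst.continuousOn.comp (by fun_prop) fun p hp => ⟨trivial, hp.2⟩
    exact (htranslate.sub h.contDiffOn_fst.continuousOn).div_const k
  · exact .of_forall fun k p hp ht =>
      h.hasFDerivAt_sqrt_speedAt_mul_slopeFst hc ⟨trivial, ht, (hsub hp).2.2⟩ k
  · intro p hp
    have := hc.deriv_nonneg (h.half_sub_pos (hsub hp))
    simp only [Left.neg_nonpos_iff]
    positivity

theorem sqrt_speedAt_mul_derivFst_snd_le (hs : BddAbove (range fun x => s (x, 0)))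
    (hr : BddBelow (range fun x => r (x, 0))) {Q : ℝ}
    (hQ : ∀ x, √(speedAt c s r (x, 0)) * derivFst r (x, 0) ≤ Q) {p₀ : ℝ × ℝ}
    (hp₀ : p₀ ∈ univ ×ˢ Ico 0 T) : √(speedAt c s r p₀) * derivFst r p₀ ≤ Q := by
  obtain ⟨M, hM⟩ := hs
  obtain ⟨m, hm⟩ := hr
  have hle := h.reflect.sqrt_speedAt_mul_derivFst_fst_le hc
    ⟨-m, by rintro _ ⟨x, rfl⟩; exact neg_le_neg (hm ⟨-x, rfl⟩)⟩
    ⟨-M, by rintro _ ⟨x, rfl⟩; exact neg_le_neg (hM ⟨-x, rfl⟩)⟩ (Y := Q)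
    (fun x => by simpa only [speedAt_reflect, derivFst_neg_comp_neg] using hQ (-x))
    (p₀ := (-p₀.1, p₀.2)) ⟨trivial, hp₀.2⟩
  simpa only [speedAt_reflect, derivFst_neg_comp_neg, neg_neg] using hle

end IsRiemannPair

section GammaLaw

variable {K₁ γ : ℝ}

theorem hasDerivAt_etaP (hγ : γ ≠ 1) {v : ℝ} (hv : 0 < v) :
    HasDerivAt (etaP K₁ γ) (-soundP K₁ γ v) v := by
  refine ((Real.hasDerivAt_rpow_const (p := -(γ - 1) / 2) (.inl hv.ne')).const_mul
    (2 * √(K₁ * γ) / (γ - 1))).congr_deriv ?_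
  have hγ' : γ - 1 ≠ 0 := sub_ne_zero.2 hγ
  rw [soundP, show -(γ - 1) / 2 - 1 = -(γ + 1) / 2 by ring]
  field_simp

theorem contDiffOn_etaP : ContDiffOn ℝ 1 (etaP K₁ γ) (Ioi 0) :=
  contDiffOn_const.mul (contDiffOn_id.rpow_const_of_ne fun _ hv => (mem_Ioi.1 hv).ne')

theorem soundP_nonneg {v : ℝ} (hv : 0 < v) : 0 ≤ soundP K₁ γ v :=
  mul_nonneg (Real.sqrt_nonneg _) (Real.rpow_nonneg hv.le _)

theorem antitoneOn_soundP (hγ : -1 ≤ γ) : AntitoneOn (soundP K₁ γ) (Ioi 0) :=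
  fun _ hv _ _ hvw => mul_le_mul_of_nonneg_left
    (Real.rpow_le_rpow_of_nonpos hv hvw (by linarith)) (Real.sqrt_nonneg _)

theorem antitoneOn_etaP (hγ : 1 < γ) : AntitoneOn (etaP K₁ γ) (Ioi 0) :=
  fun _ hv _ _ hvw => mul_le_mul_of_nonneg_left
    (Real.rpow_le_rpow_of_nonpos hv hvw (by linarith))
    (div_nonneg (by positivity) (by linarith))

theorem soundP_sq (hK : 0 ≤ K₁ * γ) {v : ℝ} (hv : 0 < v) :
    soundP K₁ γ v ^ 2 = K₁ * γ * v ^ (-γ - 1) := by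
  rw [soundP, mul_pow, Real.sq_sqrt hK, ← Real.rpow_natCast, ← Real.rpow_mul hv.le]
  congr 2
  push_cast
  ring

variable (hK₁ : 0 < K₁) (hγ : 1 < γ)
include hK₁ hγ

theorem etaP_pos {v : ℝ} (hv : 0 < v) : 0 < etaP K₁ γ v := by
  have : 0 < γ - 1 := by linarith
  rw [etaP]
  positivity

theorem KcP_pos : 0 < KcP K₁ γ := by
  have : 0 < γ - 1 := by linarith
  rw [KcP, KtauP]
  positivity

theorem soundP_eq_KcP_mul_etaP_rpow {v : ℝ} (hv : 0 < v) :
    soundP K₁ γ v = KcP K₁ γ * etaP K₁ γ v ^ ((γ + 1) / (γ - 1)) := by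
  have hγ' : 0 < γ - 1 := by linarith
  set A := 2 * √(K₁ * γ) / (γ - 1) with hA_def
  have hA : 0 < A := by positivity
  rw [soundP, KcP, KtauP, etaP, ← hA_def, Real.mul_rpow hA.le (by positivity),
    ← Real.rpow_mul hA.le, ← Real.rpow_mul hv.le, mul_assoc, ← mul_assoc (A ^ _),
    ← Real.rpow_add hA]
  have hexpA : 2 / (γ - 1) * (-(γ + 1) / 2) + (γ + 1) / (γ - 1) = 0 := by field_simp; ring
  have hexpv : -(γ - 1) / 2 * ((γ + 1) / (γ - 1)) = -(γ + 1) / 2 := by field_simp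
  rw [hexpA, hexpv, Real.rpow_zero, one_mul]

theorem sqrt_soundP {v : ℝ} (hv : 0 < v) :
    √(soundP K₁ γ v) = √(KcP K₁ γ) * etaP K₁ γ v ^ ((γ + 1) / (2 * (γ - 1))) := by
  rw [soundP_eq_KcP_mul_etaP_rpow hK₁ hγ hv, Real.sqrt_mul (KcP_pos hK₁ hγ).le,
    Real.sqrt_eq_rpow (_ ^ _), ← Real.rpow_mul (etaP_pos hK₁ hγ hv).le]
  congr 2
  rw [div_mul_div_comm, mul_one, mul_comm 2]

theorem rpow_eq_sqrt_KcP_mul_etaP_rpow {v : ℝ} (hv : 0 < v) :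
    v ^ (-(γ + 1) / 4) = (K₁ * γ) ^ (-(1 : ℝ) / 4) * √(KcP K₁ γ) *
      etaP K₁ γ v ^ ((γ + 1) / (2 * (γ - 1))) := by
  have hKγ : 0 < K₁ * γ := by positivity
  rw [mul_assoc, ← sqrt_soundP hK₁ hγ hv, soundP, Real.sqrt_mul (Real.sqrt_nonneg _),
    Real.sqrt_eq_rpow (√_), Real.sqrt_eq_rpow (K₁ * γ), Real.sqrt_eq_rpow (v ^ _),
    ← Real.rpow_mul hKγ.le, ← Real.rpow_mul hv.le, ← mul_assoc, ← Real.rpow_add hKγ]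
  have hexpK : -(1 : ℝ) / 4 + 1 / 2 * (1 / 2) = 0 := by norm_num
  rw [hexpK, Real.rpow_zero, one_mul]
  congr 1
  ring

omit hK₁ hγ in
/-- The sound speed of the `γ`-law gas as a function of `η` instead of `τ`. -/
noncomputable def gammaLawSpeed (K₁ γ v : ℝ) : ℝ :=
  KcP K₁ γ * v ^ ((γ + 1) / (γ - 1))

theorem isWaveSpeed_gammaLawSpeed : IsWaveSpeed (gammaLawSpeed K₁ γ) where
  pos v hv := mul_pos (KcP_pos hK₁ hγ) (Real.rpow_pos_of_pos hv _)
  monotoneOn v hv w _ hvw := mul_le_mul_of_nonneg_left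
    (Real.rpow_le_rpow (le_of_lt hv) hvw (div_nonneg (by linarith) (by linarith)))
    (KcP_pos hK₁ hγ).le
  contDiffOn := contDiffOn_const.mul
    (contDiffOn_id.rpow_const_of_ne fun _ hv => (mem_Ioi.1 hv).ne')

end GammaLaw

/-- The forward Riemann invariant `s = u + η(τ)`. -/
noncomputable def riemannS (K₁ γ : ℝ) (τ u : ℝ → ℝ → ℝ) (p : ℝ × ℝ) : ℝ :=
  u p.1 p.2 + etaP K₁ γ (τ p.1 p.2)

/-- The backward Riemann invariant `r = u - η(τ)`. -/
noncomputable def riemannR (K₁ γ : ℝ) (τ u : ℝ → ℝ → ℝ) (p : ℝ × ℝ) : ℝ :=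
  u p.1 p.2 - etaP K₁ γ (τ p.1 p.2)

namespace PSysSol

variable {K₁ γ T : ℝ} {τ u : ℝ → ℝ → ℝ}

section Equations

variable (h : PSysSol K₁ γ (Ico 0 T) 1 τ u)
include h

theorem pos {p : ℝ × ℝ} (hp : p ∈ univ ×ˢ Ico 0 T) : 0 < τ p.1 p.2 :=
  h.1 p.1 p.2 hp.2

theorem contDiffOn_tau : ContDiffOn ℝ 1 (fun p : ℝ × ℝ => τ p.1 p.2) (univ ×ˢ Ico 0 T) :=
  h.2.1

theorem contDiffOn_u : ContDiffOn ℝ 1 (fun p : ℝ × ℝ => u p.1 p.2) (univ ×ˢ Ico 0 T) :=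
  h.2.2.1

theorem contDiffOn_etaP_tau :
    ContDiffOn ℝ 1 (fun p : ℝ × ℝ => etaP K₁ γ (τ p.1 p.2)) (univ ×ˢ Ico 0 T) :=
  contDiffOn_etaP.comp h.contDiffOn_tau fun _ hp => h.pos hp

theorem hasDerivAt_tau {x t : ℝ} (ht : t ∈ Ioo 0 T) :
    HasDerivAt (fun t => τ x t) (derivFst (fun p => u p.1 p.2) (x, t)) t := by
  have hdiff := differentiableAt_of_mem_Ioo h.contDiffOn_tau (p := (x, t)) ⟨trivial, ht⟩
  have htime : DifferentiableAt ℝ (fun t => τ x t) t :=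
    hdiff.comp (f := fun t => (x, t)) t (by fun_prop)
  exact htime.hasDerivAt.congr_deriv
    (sub_eq_zero.1 (h.2.2.2.1 x t (Ioo_subset_Ico_self ht)))

theorem hasDerivAt_u (hK : 0 ≤ K₁ * γ) {x t : ℝ} (ht : t ∈ Ioo 0 T) :
    HasDerivAt (fun t => u x t)
      (soundP K₁ γ (τ x t) ^ 2 * derivFst (fun p => τ p.1 p.2) (x, t)) t := by
  have ht' := Ioo_subset_Ico_self ht
  have hdiff := differentiableAt_of_mem_Ioo h.contDiffOn_u (p := (x, t)) ⟨trivial, ht⟩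
  have htime : DifferentiableAt ℝ (fun t => u x t) t :=
    hdiff.comp (f := fun t => (x, t)) t (by fun_prop)
  have hτ := h.1 x t ht'
  have hpressure := ((hasDerivAt_derivFst h.contDiffOn_tau (p := (x, t)) ⟨trivial, ht'⟩).rpow_const
    (p := -γ) (.inl hτ.ne')).const_mul K₁
  refine htime.hasDerivAt.congr_deriv ?_
  rw [eq_neg_of_add_eq_zero_left (h.2.2.2.2 x t ht'), hpressure.deriv, soundP_sq hK hτ]
  ring

end Equations

section Invariants

theorem speedAt_gammaLawSpeed (hK₁ : 0 < K₁) (hγ : 1 < γ) {p : ℝ × ℝ} (hp : 0 < τ p.1 p.2) :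
    speedAt (gammaLawSpeed K₁ γ) (riemannS K₁ γ τ u) (riemannR K₁ γ τ u) p =
      soundP K₁ γ (τ p.1 p.2) := by
  have hη : (riemannS K₁ γ τ u p - riemannR K₁ γ τ u p) / 2 = etaP K₁ γ (τ p.1 p.2) := by
    rw [riemannS, riemannR]
    ring
  rw [speedAt, hη, gammaLawSpeed, soundP_eq_KcP_mul_etaP_rpow hK₁ hγ hp]

variable (h : PSysSol K₁ γ (Ico 0 T) 1 τ u)
include h

theorem hasFDerivAt_etaP_tau (hγ : γ ≠ 1) {p : ℝ × ℝ} (hp : p ∈ univ ×ˢ Ioo 0 T) :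
    HasFDerivAt (fun p : ℝ × ℝ => etaP K₁ γ (τ p.1 p.2))
      (-soundP K₁ γ (τ p.1 p.2) • fderiv ℝ (fun p : ℝ × ℝ => τ p.1 p.2) p) p :=
  HasDerivAt.comp_hasFDerivAt (h₂ := etaP K₁ γ) p
    (hasDerivAt_etaP hγ (h.pos ⟨trivial, Ioo_subset_Ico_self hp.2⟩))
    (differentiableAt_of_mem_Ioo h.contDiffOn_tau hp).hasFDerivAt

theorem fderiv_tau {p : ℝ × ℝ} (hp : p ∈ univ ×ˢ Ioo 0 T) (a : ℝ) :
    fderiv ℝ (fun p : ℝ × ℝ => τ p.1 p.2) p (a, 1) =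
      a * derivFst (fun p => τ p.1 p.2) p + derivFst (fun p => u p.1 p.2) p :=
  fderiv_apply_one_eq (differentiableAt_of_mem_Ioo h.contDiffOn_tau hp) (h.hasDerivAt_tau hp.2) a

theorem fderiv_u (hK : 0 ≤ K₁ * γ) {p : ℝ × ℝ} (hp : p ∈ univ ×ˢ Ioo 0 T) (a : ℝ) :
    fderiv ℝ (fun p : ℝ × ℝ => u p.1 p.2) p (a, 1) = a * derivFst (fun p => u p.1 p.2) p +
      soundP K₁ γ (τ p.1 p.2) ^ 2 * derivFst (fun p => τ p.1 p.2) p :=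
  fderiv_apply_one_eq (differentiableAt_of_mem_Ioo h.contDiffOn_u hp) (h.hasDerivAt_u hK hp.2) a

theorem isRiemannPair (hK₁ : 0 < K₁) (hγ : 1 < γ) :
    IsRiemannPair (gammaLawSpeed K₁ γ) T (riemannS K₁ γ τ u) (riemannR K₁ γ τ u) where
  contDiffOn_fst := h.contDiffOn_u.add h.contDiffOn_etaP_tau
  contDiffOn_snd := h.contDiffOn_u.sub h.contDiffOn_etaP_tau
  snd_lt_fst p hp := by
    have hη := etaP_pos hK₁ hγ (h.pos hp)
    rw [riemannS, riemannR]
    linarith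
  transport_fst p hp := by
    have hu := (differentiableAt_of_mem_Ioo h.contDiffOn_u hp).hasFDerivAt
    have hs : HasFDerivAt (riemannS K₁ γ τ u) _ p := hu.add (h.hasFDerivAt_etaP_tau hγ.ne' hp)
    rw [speedAt_gammaLawSpeed hK₁ hγ (h.pos ⟨trivial, Ioo_subset_Ico_self hp.2⟩), hs.fderiv,
      add_apply, smul_apply, h.fderiv_u (by positivity) hp, h.fderiv_tau hp, smul_eq_mul]
    ring
  transport_snd p hp := by
    have hu := (differentiableAt_of_mem_Ioo h.contDiffOn_u hp).hasFDerivAt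
    have hr : HasFDerivAt (riemannR K₁ γ τ u) _ p := hu.sub (h.hasFDerivAt_etaP_tau hγ.ne' hp)
    rw [speedAt_gammaLawSpeed hK₁ hγ (h.pos ⟨trivial, Ioo_subset_Ico_self hp.2⟩), hr.fderiv,
      sub_apply, smul_apply, h.fderiv_u (by positivity) hp, h.fderiv_tau hp, smul_eq_mul]
    ring

theorem sqrt_speedAt_mul_le_iff (hK₁ : 0 < K₁) (hγ : 1 < γ) {p : ℝ × ℝ}
    (hp : p ∈ univ ×ˢ Ico 0 T) {d Y : ℝ} :
    √(speedAt (gammaLawSpeed K₁ γ) (riemannS K₁ γ τ u) (riemannR K₁ γ τ u) p) * d ≤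
        √(KcP K₁ γ) * Y ↔
      etaP K₁ γ (τ p.1 p.2) ^ ((γ + 1) / (2 * (γ - 1))) * d ≤ Y := by
  rw [speedAt_gammaLawSpeed hK₁ hγ (h.pos hp), sqrt_soundP hK₁ hγ (h.pos hp), mul_assoc,
    mul_le_mul_iff_right₀ (Real.sqrt_pos.2 (KcP_pos hK₁ hγ))]

theorem derivFst_riemannS_add_derivFst_riemannR {p : ℝ × ℝ} (hp : p ∈ univ ×ˢ Ico 0 T) :
    derivFst (riemannS K₁ γ τ u) p + derivFst (riemannR K₁ γ τ u) p =
      2 * derivFst (fun p => u p.1 p.2) p := by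
  have hu := hasDerivAt_derivFst h.contDiffOn_u hp
  have hη := hasDerivAt_derivFst h.contDiffOn_etaP_tau hp
  rw [show derivFst (riemannS K₁ γ τ u) p = _ from (hu.add hη).deriv,
    show derivFst (riemannR K₁ γ τ u) p = _ from (hu.sub hη).deriv]
  ring

end Invariants

section Bounds

variable (h : PSysSol K₁ γ (Ico 0 T) 1 τ u) (hK₁ : 0 < K₁) (hγ : 1 < γ)
  (hs : BddAbove (range fun x => riemannS K₁ γ τ u (x, 0)))
  (hr : BddBelow (range fun x => riemannR K₁ γ τ u (x, 0))) {Y Q : ℝ}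
include h hK₁ hγ hs hr

theorem etaP_rpow_mul_derivFst_riemannS_le
    (hY : ∀ x, etaP K₁ γ (τ x 0) ^ ((γ + 1) / (2 * (γ - 1))) *
      derivFst (riemannS K₁ γ τ u) (x, 0) ≤ Y) {p : ℝ × ℝ} (hp : p ∈ univ ×ˢ Ico 0 T) :
    etaP K₁ γ (τ p.1 p.2) ^ ((γ + 1) / (2 * (γ - 1))) * derivFst (riemannS K₁ γ τ u) p ≤ Y := by
  have hT : (0 : ℝ) ∈ Ico 0 T := ⟨le_rfl, hp.2.1.trans_lt hp.2.2⟩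
  rw [← h.sqrt_speedAt_mul_le_iff hK₁ hγ hp]
  exact (h.isRiemannPair hK₁ hγ).sqrt_speedAt_mul_derivFst_fst_le
    (isWaveSpeed_gammaLawSpeed hK₁ hγ) hs hr
    (fun x => (h.sqrt_speedAt_mul_le_iff hK₁ hγ ⟨trivial, hT⟩).2 (hY x)) hp

theorem etaP_rpow_mul_derivFst_riemannR_le
    (hQ : ∀ x, etaP K₁ γ (τ x 0) ^ ((γ + 1) / (2 * (γ - 1))) *
      derivFst (riemannR K₁ γ τ u) (x, 0) ≤ Q) {p : ℝ × ℝ} (hp : p ∈ univ ×ˢ Ico 0 T) :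
    etaP K₁ γ (τ p.1 p.2) ^ ((γ + 1) / (2 * (γ - 1))) * derivFst (riemannR K₁ γ τ u) p ≤ Q := by
  have hT : (0 : ℝ) ∈ Ico 0 T := ⟨le_rfl, hp.2.1.trans_lt hp.2.2⟩
  rw [← h.sqrt_speedAt_mul_le_iff hK₁ hγ hp]
  exact (h.isRiemannPair hK₁ hγ).sqrt_speedAt_mul_derivFst_snd_le
    (isWaveSpeed_gammaLawSpeed hK₁ hγ) hs hr
    (fun x => (h.sqrt_speedAt_mul_le_iff hK₁ hγ ⟨trivial, hT⟩).2 (hQ x)) hp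

variable (hY : ∀ x, etaP K₁ γ (τ x 0) ^ ((γ + 1) / (2 * (γ - 1))) *
    derivFst (riemannS K₁ γ τ u) (x, 0) ≤ Y)
  (hQ : ∀ x, etaP K₁ γ (τ x 0) ^ ((γ + 1) / (2 * (γ - 1))) *
    derivFst (riemannR K₁ γ τ u) (x, 0) ≤ Q)
include hY hQ

theorem tau_rpow_mul_derivFst_u_le {p : ℝ × ℝ} (hp : p ∈ univ ×ˢ Ico 0 T) :
    τ p.1 p.2 ^ (-(γ + 1) / 4) * derivFst (fun p => u p.1 p.2) p ≤
      (K₁ * γ) ^ (-(1 : ℝ) / 4) * √(KcP K₁ γ) * ((Y + Q) / 2) := by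
  have hsum : etaP K₁ γ (τ p.1 p.2) ^ ((γ + 1) / (2 * (γ - 1))) *
      derivFst (fun p => u p.1 p.2) p ≤ (Y + Q) / 2 := by
    have hSR := add_le_add (h.etaP_rpow_mul_derivFst_riemannS_le hK₁ hγ hs hr hY hp)
      (h.etaP_rpow_mul_derivFst_riemannR_le hK₁ hγ hs hr hQ hp)
    rw [← mul_add, h.derivFst_riemannS_add_derivFst_riemannR hp] at hSR
    linarith
  rw [rpow_eq_sqrt_KcP_mul_etaP_rpow hK₁ hγ (h.pos hp), mul_assoc _ (_ ^ _)]
  exact mul_le_mul_of_nonneg_left hsum (by positivity)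

theorem tau_rpow_le (hγ₃ : γ ≤ 3) (x : ℝ) {t : ℝ} (ht : t ∈ Ico 0 T) :
    τ x t ^ ((3 - γ) / 4) ≤ τ x 0 ^ ((3 - γ) / 4) +
      (3 - γ) / 8 * (K₁ * γ) ^ (-(1 : ℝ) / 4) * √(KcP K₁ γ) * (Y + Q) * t := by
  have hstrip {t' : ℝ} (ht' : t' ∈ Icc 0 t) : (x, t') ∈ univ ×ˢ Ico 0 T :=
    ⟨trivial, ht'.1, ht'.2.trans_lt ht.2⟩
  have hcont : ContinuousOn (fun t' => τ x t' ^ ((3 - γ) / 4)) (Icc 0 t) :=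
    (h.contDiffOn_tau.continuousOn.comp (f := fun t' => (x, t')) (by fun_prop)
      fun t' ht' => hstrip ht').rpow_const fun t' ht' => .inl (h.pos (hstrip ht')).ne'
  have hderiv {t' : ℝ} (ht' : t' ∈ Ioo 0 t) : HasDerivAt (fun t' => τ x t' ^ ((3 - γ) / 4))
      ((3 - γ) / 4 * (τ x t' ^ (-(γ + 1) / 4) * derivFst (fun p => u p.1 p.2) (x, t'))) t' := by
    refine ((h.hasDerivAt_tau ⟨ht'.1, ht'.2.trans ht.2⟩).rpow_const
      (.inl (h.pos (hstrip (Ioo_subset_Icc_self ht'))).ne')).congr_deriv ?_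
    rw [show (3 - γ) / 4 - 1 = -(γ + 1) / 4 by ring]
    ring
  have hgrowth := (convex_Icc 0 t).image_sub_le_mul_sub_of_deriv_le hcont
    (fun t' ht' => (hderiv (interior_Icc.subset ht')).differentiableAt.differentiableWithinAt)
    (C := (3 - γ) / 4 * ((K₁ * γ) ^ (-(1 : ℝ) / 4) * √(KcP K₁ γ) * ((Y + Q) / 2)))
    (fun t' ht' => by
      rw [interior_Icc] at ht'
      rw [(hderiv ht').deriv]
      exact mul_le_mul_of_nonneg_left (h.tau_rpow_mul_derivFst_u_le hK₁ hγ hs hr hY hQ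
        (hstrip (Ioo_subset_Icc_self ht'))) (by linarith))
    0 ⟨le_rfl, ht.1⟩ t ⟨ht.1, le_rfl⟩ ht.1
  linarith

end Bounds

end PSysSol

theorem psystem_density_lower_bound_general {K₁ γ T : ℝ} (hK₁ : 0 < K₁) (hγ₁ : 1 < γ)
    (hγ₃ : γ < 3) {τ u : ℝ → ℝ → ℝ} (hsol : PSysSol K₁ γ (Ico 0 T) 1 τ u)
    (hs : BddAbove (range fun x => u x 0 + etaP K₁ γ (τ x 0)))
    (hr : BddBelow (range fun x => u x 0 - etaP K₁ γ (τ x 0))) {Y Q : ℝ}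
    (hY : ∀ x, etaP K₁ γ (τ x 0) ^ ((γ + 1) / (2 * (γ - 1)))
      * deriv (fun x' => u x' 0 + etaP K₁ γ (τ x' 0)) x ≤ Y)
    (hQ : ∀ x, etaP K₁ γ (τ x 0) ^ ((γ + 1) / (2 * (γ - 1)))
      * deriv (fun x' => u x' 0 - etaP K₁ γ (τ x' 0)) x ≤ Q) (x : ℝ) {t : ℝ} (ht : t ∈ Ico 0 T) :
    τ x t ≤ (τ x 0 ^ ((3 - γ) / 4)
      + (3 - γ) / 8 * (K₁ * γ) ^ (-(1 : ℝ) / 4) * √(KcP K₁ γ) * (Y + Q) * t) ^ (4 / (3 - γ)) := by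
  have hτ : 0 < τ x t := hsol.pos (p := (x, t)) ⟨trivial, ht⟩
  have hpow := hsol.tau_rpow_le hK₁ hγ₁ hs hr hY hQ hγ₃.le x ht
  rwa [← inv_div (3 - γ), Real.le_rpow_inv_iff_of_pos hτ.le
    ((Real.rpow_nonneg hτ.le _).trans hpow) (by linarith)]

namespace AssumptionA

variable {K₁ γ M₁ M₂ : ℝ} {τ₀ u₀ : ℝ → ℝ} (h : AssumptionA M₁ M₂ τ₀ u₀)
include h

theorem pos (x : ℝ) : 0 < τ₀ x :=
  h.2.2.2.1.trans_le (h.2.2.2.2.2 x)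

theorem abs_u_le (x : ℝ) : |u₀ x| ≤ M₁ := by
  linarith [h.2.2.2.2.1 x, abs_nonneg (τ₀ x), abs_nonneg (deriv τ₀ x), abs_nonneg (deriv u₀ x)]

theorem abs_deriv_u_le (x : ℝ) : |deriv u₀ x| ≤ M₁ := by
  linarith [h.2.2.2.2.1 x, abs_nonneg (τ₀ x), abs_nonneg (deriv τ₀ x), abs_nonneg (u₀ x)]

theorem abs_deriv_tau_le (x : ℝ) : |deriv τ₀ x| ≤ M₁ := by
  linarith [h.2.2.2.2.1 x, abs_nonneg (τ₀ x), abs_nonneg (u₀ x), abs_nonneg (deriv u₀ x)]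

theorem etaP_le (hγ : 1 < γ) (x : ℝ) : etaP K₁ γ (τ₀ x) ≤ etaP K₁ γ M₂ :=
  antitoneOn_etaP hγ h.2.2.2.1 (h.pos x) (h.2.2.2.2.2 x)

theorem bddAbove_range_add_etaP (hγ : 1 < γ) :
    BddAbove (range fun x => u₀ x + etaP K₁ γ (τ₀ x)) := by
  refine ⟨M₁ + etaP K₁ γ M₂, forall_mem_range.2 fun x => ?_⟩
  exact add_le_add ((le_abs_self _).trans (h.abs_u_le x)) (h.etaP_le hγ x)

theorem bddBelow_range_sub_etaP (hγ : 1 < γ) :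
    BddBelow (range fun x => u₀ x - etaP K₁ γ (τ₀ x)) := by
  refine ⟨-M₁ - etaP K₁ γ M₂, forall_mem_range.2 fun x => ?_⟩
  exact sub_le_sub (abs_le.1 (h.abs_u_le x)).1 (h.etaP_le hγ x)

theorem hasDerivAt_etaP_tau (hγ : γ ≠ 1) (x : ℝ) :
    HasDerivAt (fun x => etaP K₁ γ (τ₀ x)) (-soundP K₁ γ (τ₀ x) * deriv τ₀ x) x :=
  HasDerivAt.comp (h₂ := etaP K₁ γ) x (hasDerivAt_etaP hγ (h.pos x))
    (h.1.differentiable one_ne_zero x).hasDerivAt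

theorem abs_soundP_mul_deriv_tau_le (hγ : 1 < γ) (x : ℝ) :
    |soundP K₁ γ (τ₀ x) * deriv τ₀ x| ≤ soundP K₁ γ M₂ * M₁ := by
  rw [abs_mul, abs_of_nonneg (soundP_nonneg (h.pos x))]
  exact mul_le_mul
    (antitoneOn_soundP (by linarith) h.2.2.2.1 (h.pos x) (h.2.2.2.2.2 x))
    (h.abs_deriv_tau_le x) (abs_nonneg _) (soundP_nonneg h.2.2.2.1)

theorem bddAbove_range_etaP_rpow_mul (hK₁ : 0 < K₁) (hγ : 1 < γ) {g : ℝ → ℝ}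
    (hg : BddAbove (range g)) :
    BddAbove (range fun x => etaP K₁ γ (τ₀ x) ^ ((γ + 1) / (2 * (γ - 1))) * g x) := by
  obtain ⟨C, hC⟩ := hg
  refine ⟨etaP K₁ γ M₂ ^ ((γ + 1) / (2 * (γ - 1))) * max 0 C, forall_mem_range.2 fun x => ?_⟩
  have hη := etaP_pos hK₁ hγ (h.pos x)
  have hexp : 0 ≤ (γ + 1) / (2 * (γ - 1)) := div_nonneg (by linarith) (by linarith)
  calc etaP K₁ γ (τ₀ x) ^ ((γ + 1) / (2 * (γ - 1))) * g x
      ≤ etaP K₁ γ (τ₀ x) ^ ((γ + 1) / (2 * (γ - 1))) * max 0 C :=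
        mul_le_mul_of_nonneg_left (le_max_of_le_right (hC ⟨x, rfl⟩)) (Real.rpow_nonneg hη.le _)
    _ ≤ etaP K₁ γ M₂ ^ ((γ + 1) / (2 * (γ - 1))) * max 0 C :=
        mul_le_mul_of_nonneg_right (Real.rpow_le_rpow hη.le (h.etaP_le hγ x) hexp)
          (le_max_left _ _)

theorem bddAbove_range_deriv_add_etaP (hγ : 1 < γ) :
    BddAbove (range (deriv fun x => u₀ x + etaP K₁ γ (τ₀ x))) := by
  refine ⟨M₁ + soundP K₁ γ M₂ * M₁, forall_mem_range.2 fun x => ?_⟩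
  have hu := (h.2.1.differentiable one_ne_zero x).hasDerivAt
  rw [(hu.fun_add (h.hasDerivAt_etaP_tau hγ.ne' x)).deriv]
  linarith [(abs_le.1 (h.abs_deriv_u_le x)).2,
    (abs_le.1 (h.abs_soundP_mul_deriv_tau_le (K₁ := K₁) hγ x)).1]

theorem bddAbove_range_deriv_sub_etaP (hγ : 1 < γ) :
    BddAbove (range (deriv fun x => u₀ x - etaP K₁ γ (τ₀ x))) := by
  refine ⟨M₁ + soundP K₁ γ M₂ * M₁, forall_mem_range.2 fun x => ?_⟩
  have hu := (h.2.1.differentiable one_ne_zero x).hasDerivAt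
  rw [(hu.fun_sub (h.hasDerivAt_etaP_tau hγ.ne' x)).deriv]
  linarith [(abs_le.1 (h.abs_deriv_u_le x)).2,
    (abs_le.1 (h.abs_soundP_mul_deriv_tau_le (K₁ := K₁) hγ x)).2]

end AssumptionA

/-- Lemma 2.4: for `1 < γ < 3`, any `C¹` solution of the p-system on `ℝ × [0,T)` with
initial data satisfying Assumption A obeys the time-dependent upper bound on the specific
volume `τ(x,t) ≤ [τ₀(x)^{(3−γ)/4} + K₀ (Y+Q) t]^{4/(3−γ)}`, with
`K₀ = ((3−γ)/8)(K₁γ)^{−1/4} √K_c`. -/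
theorem psystem_density_lower_bound
    (K₁ γ T M₁ M₂ : ℝ) (hK₁ : 0 < K₁) (hγ₁ : 1 < γ) (hγ₃ : γ < 3) (hT : 0 < T)
    (τ₀ u₀ : ℝ → ℝ) (hA : AssumptionA M₁ M₂ τ₀ u₀)
    (τ u : ℝ → ℝ → ℝ) (hsol : PSysSol K₁ γ (Set.Ico 0 T) 1 τ u)
    (hτ0 : ∀ x, τ x 0 = τ₀ x) (hu0 : ∀ x, u x 0 = u₀ x)
    (y q : ℝ → ℝ → ℝ)
    (hy : ∀ x t, y x t = etaP K₁ γ (τ x t) ^ ((γ + 1) / (2 * (γ - 1)))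
        * deriv (fun x' => u x' t + etaP K₁ γ (τ x' t)) x)
    (hq : ∀ x t, q x t = etaP K₁ γ (τ x t) ^ ((γ + 1) / (2 * (γ - 1)))
        * deriv (fun x' => u x' t - etaP K₁ γ (τ x' t)) x) :
    ∀ x : ℝ, ∀ t ∈ Set.Ico 0 T,
      τ x t ≤ (τ₀ x ^ ((3 - γ) / 4)
        + (3 - γ) / 8 * (K₁ * γ) ^ (-(1 : ℝ) / 4) * Real.sqrt (KcP K₁ γ)
          * (max 0 (⨆ x', y x' 0) + max 0 (⨆ x', q x' 0)) * t) ^ (4 / (3 - γ)) := by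
  obtain rfl : (fun x => τ x 0) = τ₀ := funext hτ0
  obtain rfl : (fun x => u x 0) = u₀ := funext hu0
  have hY : BddAbove (range fun x => y x 0) := by
    simpa only [hy] using
      hA.bddAbove_range_etaP_rpow_mul hK₁ hγ₁ (hA.bddAbove_range_deriv_add_etaP hγ₁)
  have hQ : BddAbove (range fun x => q x 0) := by
    simpa only [hq] using
      hA.bddAbove_range_etaP_rpow_mul hK₁ hγ₁ (hA.bddAbove_range_deriv_sub_etaP hγ₁)
  intro x t ht
  exact psystem_density_lower_bound_general hK₁ hγ₁ hγ₃ hsol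
    (hA.bddAbove_range_add_etaP hγ₁) (hA.bddBelow_range_sub_etaP hγ₁)
    (fun x => (hy x 0).ge.trans (le_max_of_le_right (le_ciSup hY x)))
    (fun x => (hq x 0).ge.trans (le_max_of_le_right (le_ciSup hQ x))) x ht
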